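/- arXiv:2009.07180 — 3 statements merged into one kernel-verified Lean document; each statement's English description precedes it below -/
import Mathlib

section
/- Let t be a prime number and let m be a natural number with m < t. Let V_m be the (m+1)-dimensional 𝔽_t-vector space of homogeneous polynomials of degree m in two variables X, Y over 𝔽_t = ℤ/tℤ, on which SL₂(𝔽_t) acts 𝔽_t-linearly by substitution: the matrix with rows (a, b) and (c, d) sends a polynomial f(X, Y) to f(aX + cY, bX + dY). Then this representation is irreducible: the only SL₂(𝔽_t)-stable 𝔽_t-subspaces of V_m are 0 and V_m. -/
open MvPolynomial
open scoped Cardinal Polynomial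

/-!
Let `U ≠ 0` be a stable subspace. Substituting `Y ↦ Y + sX` in `f ∈ U` gives a polynomial in `s` of
degree at most `m` all of whose values lie in `U`. As the field has more than `m` elements,
Lagrange interpolation puts its coefficients in `U` too. If `f ≠ 0` has degree `n` in `Y`,
homogeneity makes the coefficient of `s ^ n` a nonzero multiple of `X ^ m`, so `X ^ m ∈ U`.
Applying the opposite substitution `X ↦ X + sY` to `X ^ m` gives the coefficients
`(m.choose n) X ^ (m - n) Y ^ n`, and the binomial coefficients are invertible.
-/

theorem coeff_mem_of_forall_eval_algebraMap_mem {K A : Type*} [Field K] [Ring A] [Algebra K A]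
    (U : Submodule K A) {p : A[X]} (hp : p.natDegree < #K)
    (hU : ∀ s : K, p.eval (algebraMap K A s) ∈ U) (n : ℕ) : p.coeff n ∈ U := by
  by_contra hn
  -- A functional vanishing on `U` turns `p` into a scalar polynomial with too many roots.
  obtain ⟨φ, hφn, hφU⟩ := Submodule.exists_le_ker_of_notMem hn
  let q : K[X] := ∑ k ∈ Finset.range (p.natDegree + 1), Polynomial.monomial k (φ (p.coeff k))
  have eval_q (s : K) : q.eval s = φ (p.eval (algebraMap K A s)) := by
    rw [Polynomial.eval_finsetSum, Polynomial.eval_eq_sum_range, map_sum]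
    refine Finset.sum_congr rfl fun k _ => ?_
    rw [Polynomial.eval_monomial, ← map_pow, ← Algebra.commutes, ← Algebra.smul_def, map_smul,
      smul_eq_mul, mul_comm]
  have natDegree_q : q.natDegree ≤ p.natDegree :=
    Polynomial.natDegree_sum_le_of_forall_le _ _ fun k hk =>
      (Polynomial.natDegree_monomial_le _).trans (Finset.mem_range_succ_iff.mp hk)
  have q_eq_zero : q = 0 :=
    q.eq_zero_of_forall_eval_zero_of_natDegree_lt_card (fun s => (eval_q s).trans (hφU (hU s)))
      ((Nat.cast_le.mpr natDegree_q).trans_lt hp)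
  have n_le : n ≤ p.natDegree :=
    Polynomial.le_natDegree_of_ne_zero fun h => hn (h ▸ U.zero_mem)
  apply hφn
  simpa [q, Polynomial.coeff_monomial, Nat.lt_succ_iff, n_le] using
    congrArg (Polynomial.coeff · n) q_eq_zero

theorem coeff_C_mul_X_add_C_pow {R : Type*} [CommSemiring R] (a b : R) (k n : ℕ) :
    ((Polynomial.C a * Polynomial.X + Polynomial.C b) ^ k).coeff n =
      a ^ n * b ^ (k - n) * k.choose n := by
  have eq_comp : (Polynomial.C a * Polynomial.X + Polynomial.C b) ^ k =
      ((Polynomial.X + Polynomial.C b) ^ k).comp (Polynomial.C a * Polynomial.X) := by simp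
  rw [eq_comp, Polynomial.comp_C_mul_X_coeff, Polynomial.coeff_X_add_C_pow]
  ring

section Shear

variable {σ R : Type*}

/-- The linear substitution `X j ↦ ∑ i, A i j * X i`: the columns of `A` are the images of the
variables, so that on linear forms it is the standard representation in the basis `X`. -/
noncomputable def linearSubst [Fintype σ] [CommSemiring R] (A : Matrix σ σ R) :
    MvPolynomial σ R →ₐ[R] MvPolynomial σ R :=
  aeval fun j => ∑ i, A i j • X i

variable [DecidableEq σ]

section CommSemiring

variable [CommSemiring R]

/-- The generic transvection `X j ↦ T * X i + X j`, where the parameter `T` is the indeterminate of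
the outer polynomial ring. For `i ≠ j`, its coefficient at `T ^ n` is the `n`-th divided power of
the root operator `X i * ∂/∂(X j)`. -/
noncomputable def shear (i j : σ) : MvPolynomial σ R →ₐ[R] (MvPolynomial σ R)[X] :=
  aeval (Function.update (fun l => Polynomial.C (X l)) j
    (Polynomial.C (X i) * Polynomial.X + Polynomial.C (X j)))

theorem shear_monomial (i j : σ) (d : σ →₀ ℕ) (a : R) :
    shear i j (monomial d a) = Polynomial.C (monomial (d.erase j) a) *
      (Polynomial.C (X i) * Polynomial.X + Polynomial.C (X j)) ^ d j := by
  have shear_erase :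
      shear i j (monomial (d.erase j) a) = Polynomial.C (monomial (d.erase j) a) := by
    rw [shear, aeval_monomial, monomial_eq, map_mul, Finsupp.prod, Finsupp.prod, map_prod]
    congr 1
    refine Finset.prod_congr rfl fun l hl => ?_
    rw [Finsupp.support_erase] at hl
    rw [Function.update_of_ne (Finset.ne_of_mem_erase hl), map_pow]
  conv_lhs => rw [← d.erase_add_single j, monomial_add_single, map_mul, map_pow, shear_erase]
  simp [shear]

theorem coeff_shear_monomial (i j : σ) (d : σ →₀ ℕ) (a : R) (n : ℕ) :
    (shear i j (monomial d a)).coeff n =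
      monomial (d - .single j n + .single i n) (a * (d j).choose n) := by
  rw [shear_monomial, Polynomial.coeff_C_mul, coeff_C_mul_X_add_C_pow]
  obtain hn | hn := lt_or_ge (d j) n
  · simp [Nat.choose_eq_zero_of_lt hn]
  have sub_single_eq : d - .single j n = d.erase j + .single j (d j - n) := by
    ext l
    obtain rfl | hl := eq_or_ne l j <;> simp [*]
  rw [sub_single_eq, monomial_add_single, monomial_add_single, mul_comm a, ← C_mul_monomial,
    map_natCast]
  ring

theorem coeff_shear (i j : σ) (f : MvPolynomial σ R) (n : ℕ) :
    (shear i j f).coeff n = ∑ d ∈ f.support,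
      monomial (d - .single j n + .single i n) (f.coeff d * (d j).choose n) := by
  conv_lhs => rw [f.as_sum, map_sum, Polynomial.finsetSum_coeff]
  simp only [coeff_shear_monomial]

theorem natDegree_shear_le (i j : σ) (f : MvPolynomial σ R) :
    (shear i j f).natDegree ≤ f.degreeOf j := by
  refine Polynomial.natDegree_le_iff_coeff_eq_zero.mpr fun n hn => ?_
  rw [coeff_shear]
  refine Finset.sum_eq_zero fun d hd => ?_
  rw [Nat.choose_eq_zero_of_lt ((monomial_le_degreeOf j hd).trans_lt hn), Nat.cast_zero, mul_zero,
    map_zero]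

end CommSemiring

theorem eval_C_shear [Fintype σ] [CommRing R] (i j : σ) (s : R) (f : MvPolynomial σ R) :
    (shear i j f).eval (C s) = linearSubst (Matrix.transvection i j s) f := by
  suffices h : ((Polynomial.aeval (C s)).restrictScalars R).comp (shear i j) =
      linearSubst (Matrix.transvection i j s) by
    simpa [Polynomial.aeval_def] using congr($h f)
  ext1 l
  obtain rfl | hl := eq_or_ne l j
  · simp [shear, linearSubst, Matrix.transvection, Matrix.one_apply, Matrix.single_apply, add_smul,
      Finset.sum_add_distrib, smul_eq_C_mul, mul_comm (C s), add_comm (X l)]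
  · simp [shear, linearSubst, Matrix.transvection, Matrix.one_apply, Matrix.single_apply, hl,
      hl.symm]

theorem coeff_shear_mem {K : Type*} [Fintype σ] [Field K] {U : Submodule K (MvPolynomial σ K)}
    (hstab : ∀ g : Matrix.SpecialLinearGroup σ K, ∀ f ∈ U, linearSubst (g : Matrix σ σ K) f ∈ U)
    {i j : σ} (hij : i ≠ j) {f : MvPolynomial σ K} (hf : f ∈ U) (hcard : f.degreeOf j < #K)
    (n : ℕ) : (shear i j f).coeff n ∈ U := by
  refine coeff_mem_of_forall_eval_algebraMap_mem U
    ((Nat.cast_le.mpr (natDegree_shear_le i j f)).trans_lt hcard) (fun s => ?_) n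
  rw [algebraMap_eq, eval_C_shear]
  exact hstab (.transvection hij s) f hf

end Shear

theorem degree_eq_of_mem_support {σ R : Type*} [CommSemiring R] {m : ℕ} {f : MvPolynomial σ R}
    (hf : f.IsHomogeneous m) {d : σ →₀ ℕ} (hd : d ∈ f.support) : d.degree = m := by
  rw [Finsupp.degree_eq_weight_one]
  exact hf (mem_support_iff.mp hd)

section BinaryForms

theorem eq_single_add_single_of_degree_eq {m : ℕ} {d : Fin 2 →₀ ℕ} (hd : d.degree = m) :
    d = .single 0 (m - d 1) + .single 1 (d 1) := by
  rw [Finsupp.degree_eq_sum, Fin.sum_univ_two] at hd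
  ext l
  fin_cases l
  · simp [← hd]
  · simp

theorem exists_coeff_shear_eq_monomial {R : Type*} [CommSemiring R] {m : ℕ}
    {f : MvPolynomial (Fin 2) R} (hf : f.IsHomogeneous m) (hf0 : f ≠ 0) :
    ∃ n, ∃ a : R, a ≠ 0 ∧ (shear 0 1 f).coeff n = monomial (.single 0 m) a := by
  obtain ⟨d, hd, d_max⟩ := f.support.exists_max_image (· 1) (support_nonempty.mpr hf0)
  refine ⟨d 1, f.coeff d, mem_support_iff.mp hd, ?_⟩
  rw [coeff_shear, Finset.sum_eq_single_of_mem d hd]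
  · have d_le : d 1 ≤ m := degree_eq_of_mem_support hf hd ▸ Finsupp.le_degree 1 d
    have exponent_eq : d - .single 1 (d 1) + .single 0 (d 1) = .single 0 m := by
      conv_lhs =>
        enter [1, 1]
        rw [eq_single_add_single_of_degree_eq (degree_eq_of_mem_support hf hd)]
      rw [add_tsub_cancel_right, ← Finsupp.single_add, Nat.sub_add_cancel d_le]
    rw [exponent_eq, Nat.choose_self, Nat.cast_one, mul_one]
  · intro e he hne
    have e_lt : e 1 < d 1 := (d_max e he).lt_of_ne fun h => hne <| by
      rw [eq_single_add_single_of_degree_eq (degree_eq_of_mem_support hf he),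
        eq_single_add_single_of_degree_eq (degree_eq_of_mem_support hf hd), h]
    rw [Nat.choose_eq_zero_of_lt e_lt, Nat.cast_zero, mul_zero, map_zero]

variable {K : Type*} [Field K] {m : ℕ} {U : Submodule K (MvPolynomial (Fin 2) K)}

theorem monomial_single_zero_mem_of_ne_bot (hcard : m < #K)
    (hU : U ≤ homogeneousSubmodule (Fin 2) K m)
    (hstab : ∀ g : Matrix.SpecialLinearGroup (Fin 2) K, ∀ f ∈ U,
      linearSubst (g : Matrix (Fin 2) (Fin 2) K) f ∈ U)
    (hne : U ≠ ⊥) : monomial (.single 0 m) 1 ∈ U := by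
  obtain ⟨f, hf, hf0⟩ := U.exists_mem_ne_zero_of_ne_bot hne
  obtain ⟨n, a, ha, coeff_eq⟩ := exists_coeff_shear_eq_monomial (hU hf) hf0
  have degreeOf_le : f.degreeOf 1 ≤ m :=
    (degreeOf_le_totalDegree f 1).trans (IsHomogeneous.totalDegree_le (hU hf))
  have mem : monomial (.single 0 m) a ∈ U := coeff_eq ▸
    coeff_shear_mem hstab zero_ne_one hf ((Nat.cast_le.mpr degreeOf_le).trans_lt hcard) n
  rw [← mul_one a, ← smul_eq_mul, ← smul_monomial] at mem
  exact (U.smul_mem_iff ha).mp mem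

theorem homogeneousSubmodule_le_of_monomial_single_zero_mem (hcard : m < #K)
    (hchoose : ∀ n ≤ m, (m.choose n : K) ≠ 0)
    (hstab : ∀ g : Matrix.SpecialLinearGroup (Fin 2) K, ∀ f ∈ U,
      linearSubst (g : Matrix (Fin 2) (Fin 2) K) f ∈ U)
    (hmem : monomial (.single 0 m) 1 ∈ U) : homogeneousSubmodule (Fin 2) K m ≤ U := by
  intro f hf
  rw [f.as_sum]
  refine U.sum_mem fun d hd => ?_
  have degree_eq : d.degree = m := degree_eq_of_mem_support hf hd
  have coeff_mem : monomial d (m.choose (d 1) : K) ∈ U := by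
    have h := coeff_shear_mem hstab one_ne_zero hmem
      (by rwa [degreeOf_monomial_eq _ _ one_ne_zero, Finsupp.single_eq_same]) (d 1)
    rwa [coeff_shear_monomial, ← Finsupp.single_tsub, Finsupp.single_eq_same, one_mul,
      ← eq_single_add_single_of_degree_eq degree_eq] at h
  have choose_ne_zero := hchoose (d 1) (degree_eq ▸ Finsupp.le_degree 1 d)
  rw [← div_mul_cancel₀ (f.coeff d) choose_ne_zero, ← smul_eq_mul, ← smul_monomial]
  exact U.smul_mem _ coeff_mem

end BinaryForms

/-- Besides characteristic zero and characteristic greater than `m`, the hypotheses cover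
the Steinberg representation, for which `K` is finite and `m = #K - 1`. -/
theorem symmetric_power_of_standard_rep_irreducible_general {K : Type*} [Field K] {m : ℕ}
    (hcard : m < #K) (hchoose : ∀ n ≤ m, (m.choose n : K) ≠ 0)
    {U : Submodule K (MvPolynomial (Fin 2) K)} (hU : U ≤ homogeneousSubmodule (Fin 2) K m)
    (hstab : ∀ g : Matrix.SpecialLinearGroup (Fin 2) K, ∀ f ∈ U,
      linearSubst (g : Matrix (Fin 2) (Fin 2) K) f ∈ U) :
    U = ⊥ ∨ U = homogeneousSubmodule (Fin 2) K m :=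
  or_iff_not_imp_left.mpr fun hne => hU.antisymm <|
    homogeneousSubmodule_le_of_monomial_single_zero_mem hcard hchoose hstab <|
      monomial_single_zero_mem_of_ne_bot hcard hU hstab hne

theorem natCast_choose_ne_zero_of_lt_charP {R : Type*} [AddMonoidWithOne R] (p : ℕ) [CharP R p]
    (hp : p.Prime) {m n : ℕ} (hm : m < p) (hn : n ≤ m) : (m.choose n : R) ≠ 0 := by
  rw [Ne, CharP.cast_eq_zero_iff R p, ← hp.coprime_iff_not_dvd]
  exact hp.coprime_choose_of_lt hm hn

/-- For a prime `t` and `m < t`, the space of homogeneous polynomials of degree `m` in two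
variables over `𝔽_t`, with `SL₂(𝔽_t)` acting by linear substitution of the variables,
is an irreducible representation: its only stable subspaces are `0` and the whole space. -/
theorem symmetric_power_of_standard_rep_irreducible
    (t : ℕ) (ht : t.Prime) (m : ℕ) (hm : m < t)
    (U : Submodule (ZMod t) (MvPolynomial (Fin 2) (ZMod t)))
    (hU : U ≤ homogeneousSubmodule (Fin 2) (ZMod t) m)
    (hstab : ∀ g : Matrix.SpecialLinearGroup (Fin 2) (ZMod t), ∀ f ∈ U,
      aeval (fun j : Fin 2 => ∑ i : Fin 2,
        (↑g : Matrix (Fin 2) (Fin 2) (ZMod t)) i j • (X i : MvPolynomial (Fin 2) (ZMod t))) f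
        ∈ U) :
    U = ⊥ ∨ U = homogeneousSubmodule (Fin 2) (ZMod t) m := by
  have := Fact.mk ht
  have hcard : (m : Cardinal) < #(ZMod t) := by
    rwa [Cardinal.mk_fintype, ZMod.card, Nat.cast_lt]
  exact symmetric_power_of_standard_rep_irreducible_general hcard
    (fun _ => natCast_choose_ne_zero_of_lt_charP t ht hm) hU hstab
end

section
/- Let A be a commutative integral domain whose Krull dimension is finite, let B be a commutative ring, and let f : A → B be a surjective ring homomorphism such that the Krull dimension of B is at least the Krull dimension of A. Then f is injective, hence an isomorphism. -/
/-!
A non-zero-divisor lies in no minimal prime. Hence, if it is killed by a surjection `A → B`, every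
chain of primes of `B` pulls back to a chain of primes of `A` which can be prolonged downwards, and
the dimension drops. In a domain every nonzero element of the kernel is such an element.
-/

open scoped nonZeroDivisors

theorem finiteRingKrullDim_iff_lt_top {R : Type*} [CommSemiring R] [Nontrivial R] :
    FiniteRingKrullDim R ↔ ringKrullDim R < ⊤ := by
  rw [finiteRingKrullDim_iff_ne_bot_and_top, lt_top_iff_ne_top, and_iff_right]
  exact Order.krullDim_ne_bot_iff.mpr inferInstance

theorem ringKrullDim_lt_of_surjective_of_mem_nonZeroDivisors {R S : Type*} [CommRing R] [CommRing S]
    [FiniteRingKrullDim R] (f : R →+* S) (hf : Function.Surjective f) {r : R} (hr : r ∈ R⁰)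
    (hfr : f r = 0) : ringKrullDim S < ringKrullDim R := by
  have hsucc : ringKrullDim S + 1 ≤ ringKrullDim R :=
    ringKrullDim_succ_le_of_surjective f hf hr hfr
  have hlength : ringKrullDim R = (LTSeries.longestOf (PrimeSpectrum R)).length :=
    Order.krullDim_eq_length_of_finiteDimensionalOrder
  rw [hlength] at hsucc ⊢
  exact ENat.WithBot.add_one_le_natCast_iff.mp hsucc

/-- A surjective ring homomorphism from an integral domain of finite Krull dimension onto a
commutative ring whose Krull dimension is at least as large is injective (hence an
isomorphism). -/
theorem injective_of_surjective_of_krullDim_le {A B : Type*} [CommRing A] [IsDomain A]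
    [CommRing B] (hA : ringKrullDim A < ⊤) (f : A →+* B) (hf : Function.Surjective f)
    (hdim : ringKrullDim A ≤ ringKrullDim B) :
    Function.Injective f := by
  have : FiniteRingKrullDim A := finiteRingKrullDim_iff_lt_top.mpr hA
  rw [injective_iff_map_eq_zero]
  intro a hfa
  by_contra ha
  exact hdim.not_gt <| ringKrullDim_lt_of_surjective_of_mem_nonZeroDivisors f hf
    (mem_nonZeroDivisors_of_ne_zero ha) hfa
end

section
/- Let F be a finite field of characteristic p with Q elements, and let PGL₂(F) denote the quotient of GL₂(F) by its center. If g ∈ PGL₂(F) has order coprime to p, then the order of g divides Q² − 1. -/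
/-!
Since `|GL_n(F)| = Q ^ (n choose 2) * ∏_{i=1}^n (Q ^ i - 1)` and the center of `GL_n(F)` consists of
the `Q - 1` scalar matrices, the part of `|PGL_n(F)|` prime to `p` is `∏_{i=2}^n (Q ^ i - 1)`, and
Lagrange's theorem applies. For `n = 2` the product is `Q ^ 2 - 1`.
-/

open Finset
open scoped MatrixGroups

section Center

variable (n R : Type*) [Fintype n] [DecidableEq n] [Nonempty n]

theorem generalLinearGroup_scalar_injective [Semiring R] :
    Function.Injective (Matrix.GeneralLinearGroup.scalar n : Rˣ →* GL n R) := fun _ _ h ↦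
  Units.ext <| Matrix.scalar_inj.mp <| congrArg Units.val h

theorem natCard_center_generalLinearGroup [CommRing R] :
    Nat.card (Subgroup.center (GL n R)) = Nat.card Rˣ := by
  rw [Matrix.GeneralLinearGroup.center_eq_range_scalar]
  exact Nat.card_range_of_injective (generalLinearGroup_scalar_injective n R)

theorem natCard_projGenLinGroup_mul_natCard_units [CommRing R] :
    Nat.card PGL(n, R) * Nat.card Rˣ = Nat.card (GL n R) := by
  rw [← natCard_center_generalLinearGroup n R]
  exact (Subgroup.card_eq_card_quotient_mul_card_subgroup _).symm

end Center

theorem prod_range_pow_sub_pow (q n : ℕ) :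
    ∏ i ∈ range n, (q ^ n - q ^ i) = q ^ n.choose 2 * ∏ i ∈ Icc 1 n, (q ^ i - 1) := by
  have factor_out : ∀ i ∈ range n, q ^ n - q ^ i = q ^ i * (q ^ (n - i) - 1) := fun i hi ↦ by
    rw [Nat.mul_sub_one, ← pow_add, Nat.add_sub_cancel' (mem_range.mp hi).le]
  have reflect : ∏ i ∈ range n, (q ^ (n - i) - 1) = ∏ i ∈ Icc 1 n, (q ^ i - 1) := by
    rw [range_eq_Ico, prod_Ico_reflect (fun i ↦ q ^ i - 1) 0 n.le_succ, Nat.add_sub_cancel_left,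
      Nat.sub_zero, Ico_add_one_right_eq_Icc]
  rw [prod_congr rfl factor_out, prod_mul_distrib, prod_pow_eq_pow_sum, sum_range_id,
    ← Nat.choose_two_right, reflect]

section FiniteField

variable (F : Type*) [Field F] [Fintype F]

theorem natCard_generalLinearGroup_eq_pow_mul_prod (n : ℕ) :
    Nat.card (GL (Fin n) F) =
      Fintype.card F ^ n.choose 2 * ∏ i ∈ Icc 1 n, (Fintype.card F ^ i - 1) := by
  rw [Matrix.card_GL_field, ← prod_range_pow_sub_pow, prod_range]

theorem natCard_projGenLinGroup_eq_pow_mul_prod (n : ℕ) :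
    Nat.card PGL(n, F) =
      Fintype.card F ^ n.choose 2 * ∏ i ∈ Icc 2 n, (Fintype.card F ^ i - 1) := by
  obtain rfl | hn := n.eq_zero_or_pos
  · have : Subsingleton PGL(0, F) := Matrix.ProjGenLinGroup.mk_surjective.subsingleton
    simp
  have : NeZero n := ⟨hn.ne'⟩
  have card_units : Nat.card Fˣ = Fintype.card F - 1 := by
    rw [Nat.card_units, Nat.card_eq_fintype_card]
  have split_first : ∏ i ∈ Icc 1 n, (Fintype.card F ^ i - 1) =
      (∏ i ∈ Icc 2 n, (Fintype.card F ^ i - 1)) * Nat.card Fˣ := by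
    rw [← prod_Ioc_mul_eq_prod_Icc hn, ← Icc_add_one_left_eq_Ioc, one_add_one_eq_two, pow_one,
      card_units]
  apply Nat.eq_of_mul_eq_mul_right (Nat.card_pos (α := Fˣ))
  rw [natCard_projGenLinGroup_mul_natCard_units, natCard_generalLinearGroup_eq_pow_mul_prod,
    split_first, mul_assoc]

end FiniteField

theorem orderOf_dvd_card_sq_sub_one_of_coprime_general
    {F : Type*} [Field F] [Fintype F] (p : ℕ) [CharP F p] {n : ℕ} (g : PGL(n, F))
    (hg : (orderOf g).Coprime p) :
    orderOf g ∣ ∏ i ∈ Icc 2 n, (Fintype.card F ^ i - 1) := by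
  obtain ⟨k, -, card_eq⟩ := FiniteField.card F p
  have coprime_card : (orderOf g).Coprime (Fintype.card F) := card_eq ▸ hg.pow_right k
  apply (coprime_card.pow_right (n.choose 2)).dvd_of_dvd_mul_left
  rw [← natCard_projGenLinGroup_eq_pow_mul_prod]
  exact orderOf_dvd_natCard g

/-- If `F` is a finite field of characteristic `p` with `Q` elements and `g ∈ PGL₂(F)` has
order coprime to `p`, then the order of `g` divides `Q² - 1`. -/
theorem orderOf_dvd_card_sq_sub_one_of_coprime
    {F : Type*} [Field F] [Fintype F] (p : ℕ) (hp : p.Prime) [CharP F p]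
    (g : Matrix.GeneralLinearGroup (Fin 2) F ⧸
      Subgroup.center (Matrix.GeneralLinearGroup (Fin 2) F))
    (hg : (orderOf g).Coprime p) :
    orderOf g ∣ Fintype.card F ^ 2 - 1 := by
  exact (orderOf_dvd_card_sq_sub_one_of_coprime_general p (n := 2) g hg).trans
    (by rw [Icc_self, prod_singleton])
end
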